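/- arXiv:math/0109124 — 3 statements merged into one kernel-verified Lean document; each statement's English description precedes it below -/
import Mathlib

section
/- Let a < t0 < b be reals and let U : (a,b) → ℝ^P be continuous at t0 with U(t0) = U0, and real-analytic on (a,t0) ∪ (t0,b). Let F be an ℝ^P-valued real-analytic map on an open set G ⊆ ℝ^P × ℝ containing both (U0, t0) and the set {(U(t), t) : t ∈ (a,t0) ∪ (t0,b)}, and assume F is uniformly Lipschitz-like at (U0, t0). If U′(t) = F(U(t), t) for all t ∈ (a,t0) ∪ (t0,b), then U′(t) = F(U(t), t) for all t ∈ (a,b) and U is real-analytic at t0. -/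
open Set

section Helpers

open Filter Topology

variable {K : Type*} [TopologicalSpace K] [CompactSpace K]
variable {E : Type*} [NormedAddCommGroup E] [NormedSpace ℝ E]
variable {H : Type*} [NormedAddCommGroup H] [NormedSpace ℝ H]

/-- Pointwise application of a continuous multilinear map to continuous functions. -/
noncomputable def pointwiseMultilinear (n : ℕ) (m : ContinuousMultilinearMap ℝ (fun _ : Fin n => E) H) :
    ContinuousMultilinearMap ℝ (fun _ : Fin n => C(K, E)) C(K, H) :=
  MultilinearMap.mkContinuous
    { toFun := fun x => ⟨fun k => m fun i => x i k, by
        have : Continuous fun k => (fun i => x i k) := continuous_pi fun i => (x i).continuous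
        exact m.cont.comp this⟩
      map_update_add' := by
        intro _ x i a b
        ext k
        have key : ∀ c : C(K, E), (fun j => Function.update x i c j k)
            = Function.update (fun j => x j k) i (c k) := by
          intro c; funext j
          by_cases h : j = i
          · subst h; simp
          · simp [h]
        rename_i inst
        have hi : inst = instDecidableEqFin n := Subsingleton.elim _ _
        subst hi
        simp only [ContinuousMap.coe_mk, ContinuousMap.add_apply]
        rw [key, key, key, ContinuousMap.add_apply, m.map_update_add]
      map_update_smul' := by
        intro _ x i a b
        ext k
        have key : ∀ c : C(K, E), (fun j => Function.update x i c j k)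
            = Function.update (fun j => x j k) i (c k) := by
          intro c; funext j
          by_cases h : j = i
          · subst h; simp
          · simp [h]
        rename_i inst
        have hi : inst = instDecidableEqFin n := Subsingleton.elim _ _
        subst hi
        simp only [ContinuousMap.coe_mk, ContinuousMap.smul_apply]
        rw [key, key, ContinuousMap.smul_apply, m.map_update_smul] }
    ‖m‖ (by
      intro x
      rw [ContinuousMap.norm_le _ (by positivity)]
      intro k
      refine (m.le_opNorm _).trans ?_
      gcongr with i
      exact (x i).norm_coe_le_norm k)

lemma pointwiseMultilinear_apply (n : ℕ)
    (m : ContinuousMultilinearMap ℝ (fun _ : Fin n => E) H) (x : Fin n → C(K, E)) (k : K) :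
    pointwiseMultilinear n m x k = m fun i => x i k := rfl

lemma pointwiseMultilinear_norm (n : ℕ)
    (m : ContinuousMultilinearMap ℝ (fun _ : Fin n => E) H) :
    ‖pointwiseMultilinear (K := K) n m‖ ≤ ‖m‖ :=
  MultilinearMap.mkContinuous_norm_le _ (norm_nonneg _) _

/-- Superposition operators with analytic symbol are analytic at constants. -/
lemma exists_superposition [CompleteSpace H] {f : E → H} {x : E} (hf : AnalyticAt ℝ f x) :
    ∃ N : C(K, E) → C(K, H), AnalyticAt ℝ N (ContinuousMap.const K x) ∧
      ∀ᶠ y in 𝓝 (ContinuousMap.const K x), ∀ k, N y k = f (y k) := by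
  obtain ⟨p, r, hp⟩ := hf
  let Q : FormalMultilinearSeries ℝ C(K, E) C(K, H) := fun n => pointwiseMultilinear n (p n)
  have hQr : r ≤ Q.radius :=
    hp.r_le.trans (FormalMultilinearSeries.radius_le_of_le fun n =>
      pointwiseMultilinear_norm n (p n))
  have hQ0 : 0 < Q.radius := hp.r_pos.trans_le hQr
  have h1 := (Q.hasFPowerSeriesOnBall hQ0).comp_sub (ContinuousMap.const K x)
  rw [zero_add] at h1
  refine ⟨_, h1.analyticAt, ?_⟩
  filter_upwards [Metric.eball_mem_nhds (ContinuousMap.const K x) hp.r_pos] with y hy k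
  have hy' : y - ContinuousMap.const K x ∈ Metric.eball (0 : C(K, E)) r := by
    rw [mem_eball_zero_iff]
    rw [Metric.mem_eball, edist_eq_enorm_sub] at hy
    exact hy
  have h2 := Q.hasSum (Metric.eball_subset_eball hQr hy')
  have h3 := h2.mapL (ContinuousMap.evalCLM ℝ k)
  have h4 : y k - x ∈ Metric.eball (0 : E) r := by
    rw [mem_eball_zero_iff] at hy' ⊢
    refine lt_of_le_of_lt ?_ hy'
    have := (y - ContinuousMap.const K x).norm_coe_le_norm k
    rw [← ofReal_norm, ← ofReal_norm]
    exact ENNReal.ofReal_le_ofReal this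
  have h5 := hp.hasSum h4
  rw [add_sub_cancel] at h5
  exact h3.unique h5

/-- The primitive vanishing at `0`, as a continuous linear operator. -/
noncomputable def primitiveCLM [CompleteSpace E] : C(Icc (0:ℝ) 1, E) →L[ℝ] C(Icc (0:ℝ) 1, E) :=
  LinearMap.mkContinuous
    { toFun := fun g => ⟨fun s => ∫ r in (0:ℝ)..s, g (projIcc 0 1 zero_le_one r), by
        have hc : Continuous fun r => g (projIcc 0 1 zero_le_one r) :=
          g.continuous.comp continuous_projIcc
        exact (intervalIntegral.continuous_primitive
          (fun a b => hc.intervalIntegrable a b) 0).comp continuous_subtype_val⟩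
      map_add' := by
        intro g h
        ext s
        have hc : ∀ g : C(Icc (0:ℝ) 1, E), Continuous fun r => g (projIcc 0 1 zero_le_one r) :=
          fun g => g.continuous.comp continuous_projIcc
        exact intervalIntegral.integral_add ((hc g).intervalIntegrable _ _)
          ((hc h).intervalIntegrable _ _)
      map_smul' := by
        intro c g
        ext s
        exact intervalIntegral.integral_smul c _ }
    1 (by
      intro g
      rw [ContinuousMap.norm_le _ (by positivity)]
      intro s
      have := intervalIntegral.norm_integral_le_of_norm_le_const (a := 0) (b := (s:ℝ))
        (f := fun r => g (projIcc 0 1 zero_le_one r)) (C := ‖g‖)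
        (fun r _ => g.norm_coe_le_norm _)
      refine this.trans ?_
      rw [sub_zero, abs_of_nonneg s.2.1, one_mul]
      exact mul_le_of_le_one_right (norm_nonneg _) s.2.2)

lemma primitiveCLM_apply [CompleteSpace E] (g : C(Icc (0:ℝ) 1, E)) (s : Icc (0:ℝ) 1) :
    primitiveCLM g s = ∫ r in (0:ℝ)..s, g (projIcc 0 1 zero_le_one r) := rfl

/-- The shear `(x, l) ↦ (x - l • v, l)`. -/
noncomputable def shear (v : E) : (E × ℝ) ≃L[ℝ] (E × ℝ) :=
  ContinuousLinearEquiv.equivOfInverse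
    ((ContinuousLinearMap.fst ℝ E ℝ - (ContinuousLinearMap.snd ℝ E ℝ).smulRight v).prod
      (ContinuousLinearMap.snd ℝ E ℝ))
    ((ContinuousLinearMap.fst ℝ E ℝ + (ContinuousLinearMap.snd ℝ E ℝ).smulRight v).prod
      (ContinuousLinearMap.snd ℝ E ℝ))
    (fun p => by ext <;> simp) (fun p => by ext <;> simp)

/-- Solutions of analytic differential equations are analytic. -/
lemma analyticAt_of_ode [CompleteSpace E] {V : ℝ → E} (hV : Continuous V) {t0 : ℝ}
    {F : E × ℝ → E} (hF : AnalyticAt ℝ F (V t0, t0))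
    (hode : ∀ᶠ t in 𝓝 t0, HasDerivAt V (F (V t, t)) t) : AnalyticAt ℝ V t0 := by
  obtain ⟨N, hN, hNf⟩ := exists_superposition (K := Icc (0:ℝ) 1) hF
  set x0 : C(Icc (0:ℝ) 1, E) := ContinuousMap.const _ (V t0) with hx0
  let A : C(Icc (0:ℝ) 1, E) →L[ℝ] C(Icc (0:ℝ) 1, E × ℝ) :=
    (ContinuousLinearMap.inl ℝ E ℝ).compLeftContinuous ℝ (Icc (0:ℝ) 1)
  let c : C(Icc (0:ℝ) 1, E × ℝ) := ⟨fun r => (0, (r:ℝ)), by fun_prop⟩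
  let e : C(Icc (0:ℝ) 1, E × ℝ) := ContinuousMap.const _ (0, t0)
  let L : C(Icc (0:ℝ) 1, E) × ℝ → C(Icc (0:ℝ) 1, E × ℝ) := fun q => A q.1 + q.2 • c + e
  have hLapp : ∀ q r, L q r = (q.1 r, t0 + q.2 * r) := by
    intro q r
    ext
    · simp [L, A, c, e]
    · simp [L, A, c, e, add_comm]
  have hL0 : L (x0, 0) = ContinuousMap.const _ (V t0, t0) := by
    ext1 r
    rw [hLapp]; simp [x0]
  have hLan : AnalyticAt ℝ L (x0, 0) := by
    have hA : AnalyticAt ℝ (fun q : C(Icc (0:ℝ) 1, E) × ℝ => A q.1) (x0, 0) :=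
      (A.comp (ContinuousLinearMap.fst ℝ _ ℝ)).analyticAt _
    exact (hA.add (analyticAt_snd.smul analyticAt_const)).add analyticAt_const
  let g : C(Icc (0:ℝ) 1, E) × ℝ → C(Icc (0:ℝ) 1, E) := fun q => primitiveCLM (N (L q))
  have hNan : AnalyticAt ℝ (fun q => N (L q)) (x0, 0) := by
    rw [← hL0] at hN
    exact hN.comp hLan
  have hgan : AnalyticAt ℝ g (x0, 0) := by
    have := (primitiveCLM (E := E)).analyticAt (N (L (x0, 0)))
    exact AnalyticAt.comp (f := fun q => N (L q)) this hNan
  let Ψ : C(Icc (0:ℝ) 1, E) × ℝ → C(Icc (0:ℝ) 1, E) × ℝ := fun q => (q.1 - q.2 • g q, q.2)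
  have hΨan : AnalyticAt ℝ Ψ (x0, 0) :=
    (analyticAt_fst.sub (analyticAt_snd.smul hgan)).prod analyticAt_snd
  have hΨd : HasFDerivAt Ψ (shear (g (x0, 0)) : C(Icc (0:ℝ) 1, E) × ℝ →L[ℝ] _) (x0, 0) := by
    have h1 := (hasFDerivAt_snd (𝕜 := ℝ) (p := (x0, (0:ℝ)))).smul
      hgan.differentiableAt.hasFDerivAt
    have h2 := ((hasFDerivAt_fst (𝕜 := ℝ) (p := (x0, (0:ℝ)))).sub h1).prodMk
      (hasFDerivAt_snd (𝕜 := ℝ) (p := (x0, (0:ℝ))))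
    refine h2.congr_fderiv ?_
    simp [shear, ContinuousLinearEquiv.equivOfInverse]
    rfl
  have hΨc : ContDiffAt ℝ ⊤ Ψ (x0, 0) := hΨan.contDiffAt
  let inv := hΨc.localInverse hΨd (by simp)
  have hΨ0 : Ψ (x0, 0) = (x0, 0) := by simp [Ψ]
  have hinv : AnalyticAt ℝ inv (x0, 0) := by
    have := hΨc.to_localInverse hΨd (by simp)
    rw [hΨ0] at this
    exact this.analyticAt
  have hleft : ∀ᶠ q in 𝓝 (x0, (0:ℝ)), inv (Ψ q) = q :=
    (hΨc.hasStrictFDerivAt' hΨd (by simp)).eventually_left_inverse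
  -- the family of rescaled solutions
  let Y : C(ℝ, C(Icc (0:ℝ) 1, E)) := ContinuousMap.curry
    ⟨fun z : ℝ × Icc (0:ℝ) 1 => V (t0 + z.1 * z.2), by fun_prop⟩
  have hYapp : ∀ l s, Y l s = V (t0 + l * s) := fun l s => rfl
  have hY0 : Y 0 = x0 := by
    ext s; rw [hYapp]; simp [x0]
  have hγ : Tendsto (fun l : ℝ => (Y l, l)) (𝓝 0) (𝓝 (x0, 0)) := by
    have : Continuous fun l : ℝ => (Y l, l) := Y.continuous.prodMk continuous_id
    have := this.tendsto 0
    rwa [hY0] at this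
  have hLγ : Tendsto (fun l : ℝ => L (Y l, l)) (𝓝 0) (𝓝 (ContinuousMap.const _ (V t0, t0))) := by
    rw [← hL0]
    exact hLan.continuousAt.tendsto.comp hγ
  obtain ⟨δ, hδ, hball⟩ := Metric.eventually_nhds_iff.1 hode
  have hsol : ∀ᶠ l : ℝ in 𝓝 0, Ψ (Y l, l) = (x0, l) := by
    filter_upwards [hLγ.eventually hNf, Metric.ball_mem_nhds (0:ℝ) hδ] with l hl hlδ
    rw [mem_ball_zero_iff, Real.norm_eq_abs] at hlδ
    refine Prod.ext ?_ rfl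
    ext1 s
    have hc : Continuous fun r => N (L (Y l, l)) (projIcc 0 1 zero_le_one r) :=
      (N (L (Y l, l))).continuous.comp continuous_projIcc
    have hder : ∀ r ∈ uIcc (0:ℝ) s, HasDerivAt (fun r => V (t0 + l * r))
        (l • N (L (Y l, l)) (projIcc 0 1 zero_le_one r)) r := by
      intro r hr
      rw [uIcc_of_le s.2.1] at hr
      have hr' : r ∈ Icc (0:ℝ) 1 := ⟨hr.1, hr.2.trans s.2.2⟩
      rw [projIcc_of_mem _ hr', hl, hLapp]
      simp only [hYapp]
      have h1 : HasDerivAt V (F (V (t0 + l * r), t0 + l * r)) (t0 + l * r) := by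
        apply hball
        rw [Real.dist_eq, add_sub_cancel_left, abs_mul, abs_of_nonneg hr'.1]
        exact (mul_le_of_le_one_right (abs_nonneg l) hr'.2).trans_lt hlδ
      have h2 : HasDerivAt (fun r : ℝ => t0 + l * r) l r := by
        simpa using ((hasDerivAt_id r).const_mul l).const_add t0
      exact h1.scomp r h2
    have hint := intervalIntegral.integral_eq_sub_of_hasDerivAt hder
      ((hc.const_smul l).intervalIntegrable _ _)
    rw [intervalIntegral.integral_smul] at hint
    change Y l s - l • primitiveCLM (N (L (Y l, l))) s = V t0
    rw [primitiveCLM_apply, hint, hYapp]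
    simp
  have hfin : ∀ᶠ l : ℝ in 𝓝 0, V (t0 + l) = (inv (x0, l)).1 ⟨1, by simp⟩ := by
    filter_upwards [hsol, hγ.eventually hleft] with l h1 h2
    rw [h1] at h2
    rw [h2, hYapp, mul_one]
  have han : AnalyticAt ℝ (fun l : ℝ => (inv (x0, l)).1 ⟨1, by simp⟩) 0 := by
    have h1 : AnalyticAt ℝ (fun l : ℝ => inv (x0, l)) 0 := by
      have h0 : AnalyticAt ℝ (fun l : ℝ => (x0, l)) 0 := analyticAt_const.prod analyticAt_id
      exact AnalyticAt.comp (f := fun l : ℝ => (x0, l)) hinv h0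
    have h2 := ((ContinuousMap.evalCLM (M := E) ℝ (⟨1, by simp⟩ : Icc (0:ℝ) 1)).comp
      (ContinuousLinearMap.fst ℝ C(Icc (0:ℝ) 1, E) ℝ)).analyticAt (inv (x0, 0))
    exact AnalyticAt.comp (f := fun l : ℝ => inv (x0, l)) h2 h1
  have han2 : AnalyticAt ℝ (fun l : ℝ => V (t0 + l)) 0 := han.congr (hfin.mono fun _ h => h.symm)
  have hs : AnalyticAt ℝ (fun t : ℝ => t - t0) t0 := analyticAt_id.sub analyticAt_const
  have han3 : AnalyticAt ℝ (fun l : ℝ => V (t0 + l)) ((fun t : ℝ => t - t0) t0) := by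
    simpa using han2
  have := AnalyticAt.comp (f := fun t : ℝ => t - t0) han3 hs
  simpa [Function.comp_def] using this

end Helpers

/-- **Welding of real-analytic solutions across a point (Proposition `raccordo`).**
`ℝ^P` (modelled as `Fin P → ℝ`) carries the maximum coordinate norm.  Let `U` be
real-analytic on `(a,t0) ∪ (t0,b)`, continuous at `t0` with `U t0 = U0`, and a solution of
`U' = F (U t) t` on `(a,t0) ∪ (t0,b)`, where `F` is real-analytic on an open set `G`
containing `(U0,t0)` and the graph of `U`, and uniformly Lipschitz-like at `(U0,t0)`.
Then `U' = F (U t) t` on all of `(a,b)` and `U` is real-analytic at `t0`. -/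
theorem stmt_4 {P : ℕ} (a t0 b : ℝ) (hat0 : a < t0) (ht0b : t0 < b)
    (U : ℝ → Fin P → ℝ) (U0 : Fin P → ℝ)
    (hcont : ContinuousAt U t0) (hU0 : U t0 = U0)
    (hUan : ∀ t ∈ Ioo a t0 ∪ Ioo t0 b, AnalyticAt ℝ U t)
    (G : Set ((Fin P → ℝ) × ℝ)) (hG : IsOpen G)
    (F : (Fin P → ℝ) → ℝ → Fin P → ℝ)
    (hFan : ∀ p ∈ G, AnalyticAt ℝ (fun q : (Fin P → ℝ) × ℝ => F q.1 q.2) p)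
    (hmem0 : ((U0, t0) : (Fin P → ℝ) × ℝ) ∈ G)
    (hmem : ∀ t ∈ Ioo a t0 ∪ Ioo t0 b, ((U t, t) : (Fin P → ℝ) × ℝ) ∈ G)
    (hlip : ∃ K : ℝ, ∃ O ∈ nhds ((U0, t0) : (Fin P → ℝ) × ℝ),
      ∀ (A B : Fin P → ℝ) (t : ℝ), ((A, t) : (Fin P → ℝ) × ℝ) ∈ O →
        ((B, t) : (Fin P → ℝ) × ℝ) ∈ O → ‖F A t - F B t‖ ≤ K * ‖A - B‖)
    (hode : ∀ t ∈ Ioo a t0 ∪ Ioo t0 b, HasDerivAt U (F (U t) t) t) :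
    (∀ t ∈ Ioo a b, HasDerivAt U (F (U t) t) t) ∧ AnalyticAt ℝ U t0 := by
  have hcF : ContinuousAt (fun t => F (U t) t) t0 := by
    have h1 : ContinuousAt (fun q : (Fin P → ℝ) × ℝ => F q.1 q.2) (U t0, t0) := by
      rw [hU0]; exact (hFan _ hmem0).continuousAt
    exact ContinuousAt.comp (f := fun t => (U t, t)) h1 (hcont.prodMk continuousAt_id)
  have h0 : HasDerivAt U (F (U t0) t0) t0 := by
    -- one-sided extension of the derivative
    have hIoo : Ioo a b ∈ nhds t0 := Ioo_mem_nhds hat0 ht0b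
    have hr : HasDerivWithinAt U (F (U t0) t0) (Ici t0) t0 := by
      refine hasDerivWithinAt_Ici_of_tendsto_deriv (s := Ioo t0 b)
        (fun t ht => (hode t (Or.inr ht)).differentiableAt.differentiableWithinAt)
        hcont.continuousWithinAt (Ioo_mem_nhdsGT ht0b) ?_
      refine (hcF.tendsto.mono_left nhdsWithin_le_nhds).congr' ?_
      filter_upwards [Ioo_mem_nhdsGT ht0b] with t ht
      exact (hode t (Or.inr ht)).deriv.symm
    have hl : HasDerivWithinAt U (F (U t0) t0) (Iic t0) t0 := by
      refine hasDerivWithinAt_Iic_of_tendsto_deriv (s := Ioo a t0)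
        (fun t ht => (hode t (Or.inl ht)).differentiableAt.differentiableWithinAt)
        hcont.continuousWithinAt (Ioo_mem_nhdsLT hat0) ?_
      refine (hcF.tendsto.mono_left nhdsWithin_le_nhds).congr' ?_
      filter_upwards [Ioo_mem_nhdsLT hat0] with t ht
      exact (hode t (Or.inl ht)).deriv.symm
    simpa using hl.union hr
  have hall : ∀ t ∈ Ioo a b, HasDerivAt U (F (U t) t) t := by
    intro t ht
    rcases lt_trichotomy t t0 with h | h | h
    · exact hode t (Or.inl ⟨ht.1, h⟩)
    · rw [h]; exact h0
    · exact hode t (Or.inr ⟨h, ht.2⟩)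
  refine ⟨hall, ?_⟩
  obtain ⟨c, hac, hct⟩ := exists_between hat0
  obtain ⟨d, htd, hdb⟩ := exists_between ht0b
  have hcd : c ≤ d := (hct.trans htd).le
  let V : ℝ → Fin P → ℝ := IccExtend hcd (fun t : Icc c d => U t)
  have hVc : Continuous V := by
    refine Continuous.Icc_extend' ?_
    rw [continuous_iff_continuousAt]
    intro t
    have h1 : ContinuousAt U t :=
      (hall t ⟨hac.trans_le t.2.1, t.2.2.trans_lt hdb⟩).continuousAt
    exact ContinuousAt.comp (f := Subtype.val) h1 continuous_subtype_val.continuousAt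
  have hVU : ∀ t ∈ Ioo c d, V t = U t := fun t ht =>
    IccExtend_of_mem hcd _ (Ioo_subset_Icc_self ht)
  have hV0 : V t0 = U0 := (hVU t0 ⟨hct, htd⟩).trans hU0
  have hVe : ∀ t ∈ Ioo c d, V =ᶠ[nhds t] U := fun t ht => by
    filter_upwards [Ioo_mem_nhds ht.1 ht.2] with s hs using hVU s hs
  have hVan : AnalyticAt ℝ V t0 := by
    refine analyticAt_of_ode hVc (F := fun q => F q.1 q.2) ?_ ?_
    · rw [hV0]; exact hFan _ hmem0
    · filter_upwards [Ioo_mem_nhds hct htd] with t ht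
      rw [hVU t ht]
      exact (hall t ⟨hac.trans ht.1, ht.2.trans hdb⟩).congr_of_eventuallyEq (hVe t ht)
  exact hVan.congr (hVe t0 ⟨hct, htd⟩)
end

section
/- Let a < t0 be reals and let V : (a,t0) → ℝ^P be real-analytic with V′(t) = F(V(t), t) for all t ∈ (a,t0), where F is an ℝ^P-valued real-analytic map on an open neighbourhood of {(V(t), t) : t ∈ (a,t0)} which is uniformly Lipschitz-like at every point of its domain. Suppose the limit V0 = lim_{t → t0⁻} V(t) exists in ℝ^P and that F is real-analytic at (V0, t0). Then V admits a real-analytic continuation up to t0: there exist r > 0 and a real-analytic map U : (a, t0 + r) → ℝ^P with U = V on (a,t0), U(t0) = V0, and U′(t) = F(U(t), t) on (a, t0 + r). -/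
open Set

open Filter Topology

theorem nemytskii {K E F : Type*} [TopologicalSpace K] [CompactSpace K]
    [NormedAddCommGroup E] [NormedSpace ℝ E] [NormedAddCommGroup F] [NormedSpace ℝ F]
    [CompleteSpace F] {f : E → F} {x0 : E} (hf : AnalyticAt ℝ f x0) :
    ∃ N : C(K, E) → C(K, F), AnalyticAt ℝ N 0 ∧
      ∀ᶠ u in 𝓝 (0 : C(K, E)), ∀ s, N u s = f (x0 + u s) := by
  obtain ⟨p, r, hp⟩ := hf
  let Q : FormalMultilinearSeries ℝ C(K, E) C(K, F) := fun n =>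
    MultilinearMap.mkContinuous
      { toFun := fun m => ⟨fun s => p n (fun i => m i s), by fun_prop⟩
        map_update_add' := by
          intro _ m i x y
          ext s
          have h : ∀ z : C(K, E), (fun j => (Function.update m i z) j s)
              = Function.update (fun j => m j s) i (z s) := by
            intro z; ext j
            by_cases hj : j = i
            · subst hj; simp
            · simp [hj]
          simp [h]
        map_update_smul' := by
          intro _ m i c x
          ext s
          have h : ∀ z : C(K, E), (fun j => (Function.update m i z) j s)
              = Function.update (fun j => m j s) i (z s) := by
            intro z; ext j
            by_cases hj : j = i
            · subst hj; simp
            · simp [hj]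
          simp [h] } ‖p n‖ (by
        intro m
        rw [ContinuousMap.norm_le _ (by positivity)]
        intro s
        refine ((p n).le_opNorm _).trans ?_
        gcongr
        exact (m _).norm_coe_le_norm s)
  have hQ : ∀ n (m : Fin n → C(K, E)) (s : K), Q n m s = p n (fun i => m i s) :=
    fun n m s => rfl
  have hrad : p.radius ≤ Q.radius :=
    FormalMultilinearSeries.radius_le_of_le fun n =>
      MultilinearMap.mkContinuous_norm_le _ (norm_nonneg _) _
  have hpos : 0 < Q.radius := hp.r_pos.trans_le (hp.r_le.trans hrad)
  have hN := Q.hasFPowerSeriesOnBall hpos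
  refine ⟨Q.sum, hN.analyticAt, ?_⟩
  have h1 : Metric.eball (0 : C(K, E)) r ∈ 𝓝 (0 : C(K, E)) := Metric.eball_mem_nhds _ hp.r_pos
  filter_upwards [h1] with u hu s
  have hu' : u ∈ Metric.eball (0 : C(K, E)) Q.radius :=
    Metric.eball_subset_eball (hp.r_le.trans hrad) hu
  have hs := hN.hasSum hu'
  rw [zero_add] at hs
  have hs2 := (ContinuousMap.evalCLM ℝ s : C(K, F) →L[ℝ] F).hasSum hs
  have hus : u s ∈ Metric.eball (0 : E) r := by
    rw [Metric.mem_eball, edist_zero_right] at hu ⊢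
    refine lt_of_le_of_lt ?_ hu
    rw [← ofReal_norm, ← ofReal_norm]
    exact ENNReal.ofReal_le_ofReal (u.norm_coe_le_norm s)
  exact hs2.unique (hp.hasSum hus)

theorem integralOp (E : Type*) [NormedAddCommGroup E] [NormedSpace ℝ E] :
    ∃ I : C(Icc (0:ℝ) 1, E) →L[ℝ] C(Icc (0:ℝ) 1, E), ∀ u s,
      I u s = ∫ x in (0:ℝ)..s, u (projIcc 0 1 zero_le_one x) := by
  have hc : ∀ u : C(Icc (0:ℝ) 1, E), Continuous fun x => u (projIcc 0 1 zero_le_one x) :=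
    fun u => u.continuous.comp continuous_projIcc
  refine ⟨LinearMap.mkContinuous
    { toFun := fun u => ⟨fun s => ∫ x in (0:ℝ)..s, u (projIcc 0 1 zero_le_one x),
        (intervalIntegral.continuous_primitive
          (fun a b => (hc u).intervalIntegrable a b) 0).comp continuous_subtype_val⟩
      map_add' := ?_
      map_smul' := ?_ } 1 ?_, fun u s => rfl⟩
  · intro u v
    ext s
    exact intervalIntegral.integral_add ((hc u).intervalIntegrable _ _)
      ((hc v).intervalIntegrable _ _)
  · intro c u
    ext s
    exact intervalIntegral.integral_smul _ _
  · intro u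
    rw [ContinuousMap.norm_le _ (by positivity)]
    intro s
    refine (intervalIntegral.norm_integral_le_of_norm_le_const (C := ‖u‖)
      fun x _ => u.norm_coe_le_norm _).trans ?_
    have := s.2.1
    have := s.2.2
    rw [sub_zero, abs_of_nonneg s.2.1]
    nlinarith [norm_nonneg u]

theorem analytic_solution_zero {E : Type*} [NormedAddCommGroup E] [NormedSpace ℝ E]
    [CompleteSpace E] {f : E → E} {α : ℝ → E} (hf : AnalyticAt ℝ f (α 0))
    (hα : ∀ᶠ t in 𝓝 (0:ℝ), HasDerivAt α (f (α t)) t) : AnalyticAt ℝ α 0 := by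
  obtain ⟨N, hN, hNf⟩ := nemytskii (K := Icc (0:ℝ) 1) hf
  obtain ⟨I, hI⟩ := integralOp E
  obtain ⟨δ, hδ, hball⟩ := Metric.eventually_nhds_iff.1 hα
  have hδ2 : -(δ/2) ≤ δ/2 := by linarith
  have hcα : ContinuousOn α (Icc (-(δ/2)) (δ/2)) := fun t ht =>
    (hball (by rw [Real.dist_eq, sub_zero, abs_lt]; constructor <;> linarith [ht.1, ht.2]
      )).continuousAt.continuousWithinAt
  let β : ℝ → E := IccExtend hδ2 ((Icc (-(δ/2)) (δ/2)).domRestrict α)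
  have hβ : Continuous β := (continuousOn_iff_continuous_domRestrict.1 hcα).Icc_extend'
  have hβα : ∀ t ∈ Icc (-(δ/2)) (δ/2), β t = α t := fun t ht => by
    simp [β, IccExtend_of_mem _ _ ht]
  let u : C(ℝ, C(Icc (0:ℝ) 1, E)) :=
    ContinuousMap.curry ⟨fun p : ℝ × Icc (0:ℝ) 1 => β (p.1 * p.2) - α 0, by fun_prop⟩
  have hu : ∀ ε s, u ε s = β (ε * s) - α 0 := fun ε s => rfl
  have hu0 : u 0 = 0 := by
    ext s
    rw [hu, zero_mul, hβα 0 ⟨by linarith, by linarith⟩]; simp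
  let c := I (N 0)
  let Ψ : C(Icc (0:ℝ) 1, E) × ℝ → C(Icc (0:ℝ) 1, E) × ℝ :=
    fun q => (q.1 - q.2 • (I (N q.1) - c), q.2)
  have hIN : AnalyticAt ℝ (fun q : C(Icc (0:ℝ) 1, E) × ℝ => I (N q.1) - c) (0, 0) := by
    have h1 : AnalyticAt ℝ (fun q : C(Icc (0:ℝ) 1, E) × ℝ => N q.1) (0, 0) :=
      AnalyticAt.fun_comp (g := N) (f := Prod.fst) hN analyticAt_fst
    exact ((I.analyticAt _).fun_comp h1).sub analyticAt_const
  have hΨ : AnalyticAt ℝ Ψ (0, 0) :=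
    (analyticAt_fst.sub (analyticAt_snd.smul hIN)).prod analyticAt_snd
  have hΨd : HasStrictFDerivAt Ψ
      ((ContinuousLinearEquiv.refl ℝ (C(Icc (0:ℝ) 1, E) × ℝ) :
        (C(Icc (0:ℝ) 1, E) × ℝ) ≃L[ℝ] _) : (C(Icc (0:ℝ) 1, E) × ℝ) →L[ℝ] _) (0, 0) := by
    have := (hasStrictFDerivAt_fst.sub
      (hasStrictFDerivAt_snd.smul hIN.hasStrictFDerivAt)).prodMk
        (hasStrictFDerivAt_snd (𝕜 := ℝ) (p := ((0 : C(Icc (0:ℝ) 1, E)), (0:ℝ))))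
    refine this.congr_fderiv ?_
    ext <;> simp [c]
  have hinv : AnalyticAt ℝ (hΨd.localInverse Ψ _ _) (Ψ (0, 0)) := by
    obtain ⟨p, hp⟩ := hΨ
    refine ((hΨd.toOpenPartialHomeomorph Ψ).hasFPowerSeriesAt_symm
      hΨd.mem_toOpenPartialHomeomorph_source (i := ContinuousLinearEquiv.refl ℝ _) hp ?_).analyticAt
    have h2 := hp.hasStrictFDerivAt.hasFDerivAt.unique hΨd.hasFDerivAt
    rw [← h2]
    simp
  have hΨ0 : Ψ (0, 0) = (0, 0) := by simp [Ψ]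
  rw [hΨ0] at hinv
  have hcurve : Tendsto (fun ε : ℝ => (u ε, ε)) (𝓝 0) (𝓝 (0, 0)) := by
    have : Continuous (fun ε : ℝ => (u ε, ε)) := by fun_prop
    simpa [hu0] using this.tendsto 0
  have hut : Tendsto u (𝓝 0) (𝓝 0) := by simpa [hu0] using u.continuous.tendsto 0
  have hleft := hcurve.eventually hΨd.eventually_left_inverse
  have hsmall : ∀ᶠ ε : ℝ in 𝓝 0, |ε| < δ/2 := by
    have := Metric.ball_mem_nhds (0:ℝ) (half_pos hδ)
    filter_upwards [this] with ε hε
    simpa using hε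
  have hmemI : ∀ {ε x : ℝ}, |ε| < δ/2 → x ∈ Icc (0:ℝ) 1 → |ε * x| < δ/2 := by
    intro ε x hε hx
    rw [abs_mul, abs_of_nonneg hx.1]
    nlinarith [abs_nonneg ε, hx.2, hx.1]
  have hmemI' : ∀ {ε x : ℝ}, |ε| < δ/2 → x ∈ Icc (0:ℝ) 1 → ε * x ∈ Icc (-(δ/2)) (δ/2) := by
    intro ε x hε hx
    have := abs_lt.1 (hmemI hε hx)
    exact ⟨this.1.le, this.2.le⟩
  have key : ∀ᶠ ε : ℝ in 𝓝 0, Ψ (u ε, ε) = (ε • c, ε) := by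
    filter_upwards [hsmall, hut.eventually hNf] with ε hε hNε
    have : u ε = ε • I (N (u ε)) := by
      ext s
      rw [ContinuousMap.smul_apply, hI, ← intervalIntegral.integral_smul, hu,
        hβα _ (hmemI' hε s.2)]
      have hcont : Continuous fun x => ε • N (u ε) (projIcc 0 1 zero_le_one x) :=
        (((N (u ε)).continuous.comp continuous_projIcc).const_smul ε)
      rw [intervalIntegral.integral_eq_sub_of_hasDerivAt (f := fun x => α (ε * x)) _
        (hcont.intervalIntegrable _ _)]
      · simp
      · intro x hx
        rw [uIcc_of_le s.2.1] at hx
        have hx1 : x ∈ Icc (0:ℝ) 1 := ⟨hx.1, hx.2.trans s.2.2⟩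
        rw [projIcc_of_mem _ hx1, hNε, hu, hβα _ (hmemI' hε hx1), add_sub_cancel]
        have h1 := hball (y := ε * x) (by
          rw [Real.dist_eq, sub_zero]; linarith [hmemI hε hx1])
        have h2 : HasDerivAt (fun y => ε * y) ε x := by
          simpa using (hasDerivAt_id x).const_mul ε
        exact h1.scomp x h2
    simp only [Ψ, smul_sub, Prod.mk.injEq, and_true]
    rw [← this]; abel
  let one : Icc (0:ℝ) 1 := ⟨1, by simp⟩
  have hfin : AnalyticAt ℝ (fun ε : ℝ =>
      (ContinuousMap.evalCLM ℝ one : C(Icc (0:ℝ) 1, E) →L[ℝ] E)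
        (hΨd.localInverse Ψ _ _ (ε • c, ε)).1 + α 0) 0 := by
    have h1 : AnalyticAt ℝ (fun ε : ℝ => (ε • c, ε)) 0 :=
      (analyticAt_id.smul analyticAt_const).prod analyticAt_id
    have h2 : AnalyticAt ℝ (fun ε : ℝ => hΨd.localInverse Ψ _ _ (ε • c, ε)) 0 :=
      AnalyticAt.fun_comp_of_eq hinv h1 (by simp)
    have h3 := analyticAt_fst.fun_comp h2
    exact ((ContinuousLinearMap.analyticAt _ _).fun_comp h3).add analyticAt_const
  refine hfin.congr ?_
  filter_upwards [hsmall, key, hleft] with ε hε hk hl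
  rw [← hk, hl]
  change u ε one + α 0 = α ε
  have h1 : (one : ℝ) = 1 := rfl
  have := hmemI' hε one.2
  rw [hu, hβα _ this, h1]
  simp

theorem analytic_solution {E : Type*} [NormedAddCommGroup E] [NormedSpace ℝ E]
    [CompleteSpace E] {F : E → ℝ → E} {U : ℝ → E} {t1 : ℝ}
    (hF : AnalyticAt ℝ (fun q : E × ℝ => F q.1 q.2) (U t1, t1))
    (hU : ∀ᶠ t in 𝓝 t1, HasDerivAt U (F (U t) t) t) : AnalyticAt ℝ U t1 := by
  have hf : AnalyticAt ℝ (fun q : E × ℝ => (F q.1 q.2, (1:ℝ))) (U (0 + t1), 0 + t1) := by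
    rw [zero_add]; exact hF.prod analyticAt_const
  have hW : AnalyticAt ℝ (fun t => (U (t + t1), t + t1)) 0 := by
    refine analytic_solution_zero (f := fun q : E × ℝ => (F q.1 q.2, (1:ℝ))) hf ?_
    have ht : Tendsto (fun t : ℝ => t + t1) (𝓝 0) (𝓝 t1) := by
      have : Continuous fun t : ℝ => t + t1 := by fun_prop
      simpa using this.tendsto 0
    filter_upwards [ht.eventually hU] with t h
    exact (h.comp_add_const t t1).prodMk ((hasDerivAt_id t).add_const t1)
  have h1 : AnalyticAt ℝ (fun t => U (t + t1)) 0 := analyticAt_fst.fun_comp hW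
  have h2 : AnalyticAt ℝ (fun t => U ((t - t1) + t1)) t1 :=
    AnalyticAt.fun_comp_of_eq (g := fun t => U (t + t1)) (f := fun t => t - t1) h1
      (analyticAt_id.sub analyticAt_const) (by simp)
  simpa using h2

/-- **Continuation of a real-analytic solution up to an endpoint (Proposition
`continuazione`).**  `ℝ^P` (modelled as `Fin P → ℝ`) carries the maximum coordinate norm.
Let `V` be real-analytic on `(a,t0)`, a solution of `V' = F (V t) t` there, where `F` is
real-analytic on an open neighbourhood `G` of the graph of `V`, uniformly Lipschitz-like at
every point of `G`.  If `V(t) → V0` as `t → t0⁻` and `F` is real-analytic at `(V0,t0)`,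
then `V` extends to a real-analytic solution on `(a, t0 + r)` for some `r > 0`, taking the
value `V0` at `t0`. -/
theorem stmt_5 {P : ℕ} (a t0 : ℝ) (hat0 : a < t0)
    (V : ℝ → Fin P → ℝ)
    (hVan : ∀ t ∈ Ioo a t0, AnalyticAt ℝ V t)
    (G : Set ((Fin P → ℝ) × ℝ)) (hG : IsOpen G)
    (hmem : ∀ t ∈ Ioo a t0, ((V t, t) : (Fin P → ℝ) × ℝ) ∈ G)
    (F : (Fin P → ℝ) → ℝ → Fin P → ℝ)
    (hFan : ∀ p ∈ G, AnalyticAt ℝ (fun q : (Fin P → ℝ) × ℝ => F q.1 q.2) p)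
    (hlip : ∀ p ∈ G, ∃ K : ℝ, ∃ O ∈ nhds p,
      ∀ (A B : Fin P → ℝ) (t : ℝ), ((A, t) : (Fin P → ℝ) × ℝ) ∈ O →
        ((B, t) : (Fin P → ℝ) × ℝ) ∈ O → ‖F A t - F B t‖ ≤ K * ‖A - B‖)
    (hode : ∀ t ∈ Ioo a t0, HasDerivAt V (F (V t) t) t)
    (V0 : Fin P → ℝ)
    (hlim : Filter.Tendsto V (nhdsWithin t0 (Iio t0)) (nhds V0))
    (hF0 : AnalyticAt ℝ (fun q : (Fin P → ℝ) × ℝ => F q.1 q.2) ((V0, t0) : (Fin P → ℝ) × ℝ)) :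
    ∃ r > (0 : ℝ), ∃ Uext : ℝ → Fin P → ℝ,
      (∀ t ∈ Ioo a (t0 + r), AnalyticAt ℝ Uext t) ∧
      (∀ t ∈ Ioo a t0, Uext t = V t) ∧ Uext t0 = V0 ∧
      (∀ t ∈ Ioo a (t0 + r), HasDerivAt Uext (F (Uext t) t) t) := by
  have hf : AnalyticAt ℝ (fun q : (Fin P → ℝ) × ℝ => (F q.1 q.2, (1:ℝ))) (V0, t0) :=
    hF0.prod analyticAt_const
  obtain ⟨α, hα0, ε, hε, hα⟩ :=
    (hf.contDiffAt (n := 1)).exists_forall_mem_closedBall_exists_eq_forall_mem_Ioo_hasDerivAt₀ t0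
  have ht0m : t0 ∈ Ioo (t0 - ε) (t0 + ε) := ⟨by linarith, by linarith⟩
  have hα1 : ∀ t ∈ Ioo (t0 - ε) (t0 + ε),
      HasDerivAt (fun t => (α t).1) (F (α t).1 (α t).2) t := fun t ht =>
    (hasFDerivAt_fst (𝕜 := ℝ) (p := α t)).comp_hasDerivAt t (hα t ht)
  have hα2 : ∀ t ∈ Ioo (t0 - ε) (t0 + ε), HasDerivAt (fun t => (α t).2) 1 t := fun t ht =>
    (hasFDerivAt_snd (𝕜 := ℝ) (p := α t)).comp_hasDerivAt t (hα t ht)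
  have hsnd : EqOn (fun t => (α t).2) (fun t => t) (Ioo (t0 - ε) (t0 + ε)) := by
    refine isOpen_Ioo.eqOn_of_deriv_eq isPreconnected_Ioo
      (fun t ht => (hα2 t ht).differentiableAt.differentiableWithinAt)
      differentiableOn_id (fun t ht => ?_) ht0m (by simp [hα0])
    rw [(hα2 t ht).deriv]; simp
  have hαF : ∀ t ∈ Ioo (t0 - ε) (t0 + ε),
      HasDerivAt (fun t => (α t).1) (F (α t).1 t) t := fun t ht => by
    have h1 := hα1 t ht
    have h2 : (α t).2 = t := hsnd ht
    rwa [h2] at h1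
  -- analyticity of `F` along the solution
  have hαan : ∀ᶠ t in 𝓝 t0, AnalyticAt ℝ (fun q : (Fin P → ℝ) × ℝ => F q.1 q.2) (α t) := by
    have hc : Tendsto α (𝓝 t0) (𝓝 (V0, t0)) := by
      rw [← hα0]; exact (hα t0 ht0m).continuousAt
    exact hc.eventually hF0.eventually_analyticAt
  obtain ⟨δ, hδ, hball⟩ := Metric.eventually_nhds_iff.1 hαan
  let r := min ε δ
  have hr : 0 < r := lt_min hε hδ
  let U : ℝ → Fin P → ℝ := fun t => if t < t0 then V t else (α t).1
  have hUlt : ∀ t, t < t0 → U t = V t := fun t ht => by simp [U, ht]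
  have hUge : ∀ t, t0 ≤ t → U t = (α t).1 := fun t ht => by simp [U, not_lt.2 ht]
  have hU0 : U t0 = V0 := by rw [hUge t0 le_rfl, hα0]
  have hUVev : ∀ t, t < t0 → U =ᶠ[𝓝 t] V := fun t ht => by
    filter_upwards [Iio_mem_nhds ht] with s hs using hUlt s hs
  have hmemr : ∀ t, t0 ≤ t → t < t0 + r → t ∈ Ioo (t0 - ε) (t0 + ε) := fun t h1 h2 =>
    ⟨by linarith, h2.trans_le (by gcongr; exact min_le_left _ _)⟩
  have hIoo : Ioo a t0 ∈ 𝓝[<] t0 := Ioo_mem_nhdsLT hat0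
  have hder0 : HasDerivAt U (F (U t0) t0) t0 := by
    have hleft : HasDerivWithinAt U (F (U t0) t0) (Iic t0) t0 := by
      refine hasDerivWithinAt_Iic_of_tendsto_deriv (s := Ioo a t0) ?_ ?_ hIoo ?_
      · intro t ht
        exact ((hode t ht).congr_of_eventuallyEq
          (hUVev t ht.2)).differentiableAt.differentiableWithinAt
      · have h1 : Tendsto V (𝓝[Ioo a t0] t0) (𝓝 (U t0)) := by
          rw [hU0]
          exact hlim.mono_left (nhdsWithin_mono _ fun t ht => ht.2)
        refine h1.congr' ?_
        filter_upwards [self_mem_nhdsWithin] with t ht using (hUlt t ht.2).symm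
      · have hid : Tendsto (fun t : ℝ => t) (𝓝[<] t0) (𝓝 t0) :=
          tendsto_id.mono_left nhdsWithin_le_nhds
        have h1 : Tendsto (fun t => F (V t) t) (𝓝[<] t0) (𝓝 (F V0 t0)) :=
          hF0.continuousAt.tendsto.comp (hlim.prodMk_nhds hid)
        rw [hU0]
        refine h1.congr' ?_
        filter_upwards [hIoo] with t ht
        exact ((hode t ht).congr_of_eventuallyEq (hUVev t ht.2)).deriv.symm
    have hright : HasDerivWithinAt U (F (U t0) t0) (Ici t0) t0 := by
      have h1 := (hαF t0 ht0m).hasDerivWithinAt (s := Ici t0)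
      rw [← hUge t0 le_rfl] at h1
      exact h1.congr (fun t ht => hUge t ht) (hUge t0 le_rfl)
    have h := hleft.union hright
    rw [Iic_union_Ici] at h
    exact hasDerivWithinAt_univ.1 h
  have hderU : ∀ t ∈ Ioo a (t0 + r), HasDerivAt U (F (U t) t) t := by
    intro t ht
    rcases lt_trichotomy t t0 with h | h | h
    · rw [hUlt t h]
      exact (hode t ⟨ht.1, h⟩).congr_of_eventuallyEq (hUVev t h)
    · rw [h]; exact hder0
    · rw [hUge t h.le]
      refine (hαF t (hmemr t h.le ht.2)).congr_of_eventuallyEq ?_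
      filter_upwards [Ioi_mem_nhds h] with s hs using hUge s (le_of_lt hs)
  refine ⟨r, hr, U, fun t ht => ?_, fun t ht => hUlt t ht.2, hU0, hderU⟩
  rcases lt_or_ge t t0 with h | h
  · exact (hVan t ⟨ht.1, h⟩).congr (hUVev t h).symm
  · refine analytic_solution (F := F) ?_ ?_
    · have h1 : α t = (U t, t) := by
        rw [hUge t h]
        exact Prod.ext rfl (hsnd (hmemr t h ht.2))
      rw [← h1]
      refine hball ?_
      rw [Real.dist_eq, abs_of_nonneg (sub_nonneg.2 h)]
      have := min_le_right ε δ
      have := ht.2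
      simp only [r] at this
      linarith
    · filter_upwards [isOpen_Ioo.mem_nhds ht] with s hs using hderU s hs
end

section
/- Let a < t0 be reals and let U : (a,t0) → ℝ^P be real-analytic, satisfying U′(t) = F(U(t), t) for all t ∈ (a,t0), where F is an ℝ^P-valued real-analytic map on an open set G ⊆ ℝ^P × ℝ containing {(U(t), t) : t ∈ (a,t0)}, uniformly Lipschitz-like at every point of G. Suppose there exist U0 ∈ ℝ^P with (U0, t0) ∈ G and a strictly increasing sequence t_h → t0 in (a,t0) such that U(t_h) → U0. Then lim_{t → t0⁻} U(t) = U0; consequently U admits a real-analytic continuation up to t0 solving the same equation. -/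
open Set

section aux
open Filter Topology
open scoped ContDiff

variable {E : Type*} [NormedAddCommGroup E] [NormedSpace ℝ E] 
  {F : Type*} [NormedAddCommGroup F] [NormedSpace ℝ F] 
  {K : Type*} [TopologicalSpace K] [CompactSpace K]

/-- pointwise application of a multilinear map to continuous functions -/
noncomputable def nemMul {n : ℕ} (p : ContinuousMultilinearMap ℝ (fun _ : Fin n => E) F) :
    ContinuousMultilinearMap ℝ (fun _ : Fin n => C(K, E)) C(K, F) :=
  MultilinearMap.mkContinuous
    { toFun := fun v => ⟨fun s => p (fun i => v i s), by fun_prop⟩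
      map_update_add' := by
        intro _ v i x y
        ext s
        have h : ∀ z : C(K, E), (fun j => (Function.update v i z) j s)
            = Function.update (fun j => v j s) i (z s) := by
          intro z; funext j
          by_cases hj : j = i
          · subst hj; simp
          · simp [hj]
        have := p.map_update_add (fun j => v j s) i (x s) (y s)
        simp only [ContinuousMap.coe_mk, ContinuousMap.add_apply]
        convert this using 2 <;> try rw [← h]
        convert h (x + y) using 2
        congr
      map_update_smul' := by
        intro _ v i c x
        ext s
        have h : ∀ z : C(K, E), (fun j => (Function.update v i z) j s)
            = Function.update (fun j => v j s) i (z s) := by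
          intro z; funext j
          by_cases hj : j = i
          · subst hj; simp
          · simp [hj]
        have := p.map_update_smul (fun j => v j s) i c (x s)
        simp only [ContinuousMap.coe_mk, ContinuousMap.smul_apply]
        rw [h, h]
        exact this }
    ‖p‖ (by
      intro v
      rw [ContinuousMap.norm_le _ (by positivity)]
      intro s
      refine (p.le_opNorm _).trans ?_
      gcongr with i
      exact (v i).norm_coe_le_norm s)

lemma nemMul_apply {n : ℕ} (p : ContinuousMultilinearMap ℝ (fun _ : Fin n => E) F)
    (v : Fin n → C(K, E)) (s : K) : nemMul p v s = p (fun i => v i s) := rfl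

lemma nemMul_norm {n : ℕ} (p : ContinuousMultilinearMap ℝ (fun _ : Fin n => E) F) :
    ‖(nemMul p : ContinuousMultilinearMap ℝ (fun _ : Fin n => C(K, E)) C(K, F))‖ ≤ ‖p‖ :=
  MultilinearMap.mkContinuous_norm_le _ (norm_nonneg _) _

lemma exists_nem [CompleteSpace F] {f : E → F} {x0 : E} (hf : AnalyticAt ℝ f x0) :
    ∃ N : C(K, E) → C(K, F), AnalyticAt ℝ N 0 ∧
      ∀ᶠ y in 𝓝 (0 : C(K, E)), ∀ s, N y s = f (x0 + y s) := by
  obtain ⟨p, r, hp⟩ := hf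
  let q : FormalMultilinearSeries ℝ C(K, E) C(K, F) := fun n => nemMul (p n)
  have hrad : p.radius ≤ q.radius := by
    refine FormalMultilinearSeries.radius_le_of_le (fun n => nemMul_norm (p n))
  have hpos : 0 < q.radius := (hp.r_pos.trans_le hp.r_le).trans_le hrad
  have hq := q.hasFPowerSeriesOnBall hpos
  refine ⟨q.sum, hq.analyticAt, ?_⟩
  have hball : Metric.eball (0 : C(K, E)) r ∈ 𝓝 0 := Metric.eball_mem_nhds _ hp.r_pos
  filter_upwards [hball] with y hy s
  have hy' : y ∈ Metric.eball (0 : C(K, E)) q.radius :=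
    Metric.eball_subset_eball (hp.r_le.trans hrad) hy
  have h1 := hq.hasSum hy'
  rw [zero_add] at h1
  have h2 := h1.mapL (ContinuousMap.evalCLM ℝ s)
  have hys : y s ∈ Metric.eball (0 : E) r := by
    rw [Metric.mem_eball, edist_zero_right] at hy ⊢
    refine lt_of_le_of_lt ?_ hy
    exact enorm_le_iff_norm_le.mpr (y.norm_coe_le_norm s)
  have h3 := hp.hasSum hys
  exact h2.unique h3

abbrev I01 := Icc (0:ℝ) 1

/-- primitive operator -/
noncomputable def primL [CompleteSpace E] : C(I01, E) →L[ℝ] C(I01, E) :=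
  LinearMap.mkContinuous
    { toFun := fun w => ⟨fun s => ∫ σ in (0:ℝ)..s, w (projIcc 0 1 zero_le_one σ), by
        have : Continuous fun σ => w (projIcc 0 1 zero_le_one σ) :=
          w.continuous.comp continuous_projIcc
        exact (intervalIntegral.continuous_primitive
          (fun a b => this.intervalIntegrable a b) 0).comp continuous_subtype_val⟩
      map_add' := by
        intro v w
        ext s
        have hc : ∀ w : C(I01, E), Continuous fun σ => w (projIcc 0 1 zero_le_one σ) :=
          fun w => w.continuous.comp continuous_projIcc
        simp only [ContinuousMap.coe_mk, ContinuousMap.add_apply]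
        exact intervalIntegral.integral_add ((hc v).intervalIntegrable _ _)
          ((hc w).intervalIntegrable _ _)
      map_smul' := by
        intro c v
        ext s
        simp }
    1 (by
      intro w
      rw [ContinuousMap.norm_le _ (by positivity)]
      intro s
      have := intervalIntegral.norm_integral_le_of_norm_le_const (a := (0:ℝ)) (b := s) (C := ‖w‖)
        (f := fun σ => w (projIcc 0 1 zero_le_one σ)) (fun x _ => w.norm_coe_le_norm _)
      refine this.trans ?_
      have h1 : |(s:ℝ) - 0| ≤ 1 := by
        rw [sub_zero, abs_of_nonneg s.2.1]; exact s.2.2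
      nlinarith [norm_nonneg w])

lemma primL_apply [CompleteSpace E] (w : C(I01, E)) (s : I01) :
    primL w s = ∫ σ in (0:ℝ)..s, w (projIcc 0 1 zero_le_one σ) := rfl

lemma analytic_of_ode [CompleteSpace E] {f : E → E} {u : ℝ → E} (hf : AnalyticAt ℝ f (u 0))
    (hu : ∀ᶠ t in 𝓝 (0:ℝ), HasDerivAt u (f (u t)) t) : AnalyticAt ℝ u 0 := by
  obtain ⟨N, hN, hNf⟩ := exists_nem (K := I01) hf
  set Φ : ℝ × C(I01, E) → C(I01, E) := fun z => z.2 - z.1 • primL (N z.2) with hΦ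
  have hΦan : AnalyticAt ℝ Φ (0, 0) := by
    have h2 : AnalyticAt ℝ (fun z : ℝ × C(I01, E) => N z.2) (0, 0) :=
      AnalyticAt.comp (g := N) (f := Prod.snd) hN analyticAt_snd
    have h3 : AnalyticAt ℝ (fun z : ℝ × C(I01, E) => primL (N z.2)) (0, 0) :=
      AnalyticAt.fun_comp (g := primL) ((primL (E := E)).analyticAt _) h2
    exact analyticAt_snd.sub (analyticAt_fst.smul h3)
  have hcd : ContDiffAt ℝ ω Φ (0, 0) := hΦan.contDiffAt
  have hinv : (fderiv ℝ Φ (0, 0) ∘L .inr ℝ ℝ C(I01, E)).IsInvertible := by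
    have h1 : HasFDerivAt (fun y : C(I01, E) => Φ (0, y))
        (fderiv ℝ Φ (0, 0) ∘L .inr ℝ ℝ C(I01, E)) 0 :=
      HasFDerivAt.comp (g := Φ) (0 : C(I01, E)) hΦan.differentiableAt.hasFDerivAt
        (hasFDerivAt_prodMk_right (0:ℝ) (0 : C(I01, E)))
    have h2 : (fun y : C(I01, E) => Φ (0, y)) = id := by
      funext y; simp [hΦ]
    rw [h2] at h1
    rw [h1.unique (hasFDerivAt_id _)]
    exact ⟨.refl ℝ _, rfl⟩
  set ψ := hcd.implicitFunction (by simp) hinv with hψ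
  have hψcd : ContDiffAt ℝ ω ψ 0 := hcd.contDiffAt_implicitFunction (by simp) hinv
  have hψan : AnalyticAt ℝ ψ 0 := hψcd.analyticAt
  have hiff := hcd.eventually_apply_eq_iff_implicitFunction (by simp) hinv
  rw [← hψ] at hiff
  -- the curve
  obtain ⟨δ, hδ, hball⟩ := Metric.eventually_nhds_iff.mp hu
  have hd : ∀ t, |t| < δ → HasDerivAt u (f (u t)) t := fun t ht => hball (by simpa using ht)
  have hle : -(δ/2) ≤ δ/2 := by linarith
  let g : ℝ → E := fun t => u (projIcc (-(δ/2)) (δ/2) hle t)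
  have hgc : Continuous g := by
    have : ContinuousOn u (Icc (-(δ/2)) (δ/2)) := fun t ht =>
      (hd t (by rw [abs_lt]; constructor <;> linarith [ht.1, ht.2])).continuousAt.continuousWithinAt
    exact (continuousOn_iff_continuous_domRestrict.mp this).comp continuous_projIcc
  have hgu : ∀ t, |t| ≤ δ/2 → g t = u t := fun t ht => by
    simp only [g]; rw [projIcc_of_mem hle (abs_le.mp ht)]
  let Y : C(ℝ, C(I01, E)) := ContinuousMap.curry ⟨fun z => g (z.1 * z.2) - u 0, by fun_prop⟩
  have hY : ∀ e s, Y e s = g (e * s) - u 0 := fun e s => rfl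
  have hY0 : Y 0 = 0 := by
    ext s; rw [hY, zero_mul, hgu 0 (by simp; positivity)]; simp
  have hYt : Tendsto Y (𝓝 0) (𝓝 0) := by
    have := Y.continuous.tendsto 0; rwa [hY0] at this
  have hΦ0 : Φ (0, 0) = 0 := by simp [hΦ]
  have hev : ∀ᶠ e in 𝓝 (0:ℝ), |e| ≤ δ/2 := by
    filter_upwards [Metric.closedBall_mem_nhds (0:ℝ) (half_pos hδ)] with e he
    simpa using he
  have hpair : Tendsto (fun e : ℝ => (e, Y e)) (𝓝 0) (𝓝 (0, 0)) :=
    tendsto_id.prodMk_nhds hYt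
  have key : ∀ᶠ e in 𝓝 (0:ℝ), ψ e = Y e := by
    filter_upwards [hev, hYt.eventually hNf, hpair.eventually hiff] with e he hNe hie
    refine hie.mp ?_
    rw [hΦ0]
    simp only [hΦ]
    rw [sub_eq_zero]
    ext s
    have hes : ∀ σ ∈ Icc (0:ℝ) 1, |e * σ| ≤ δ/2 := by
      intro σ hσ
      rw [abs_mul, abs_of_nonneg hσ.1]
      exact (mul_le_of_le_one_right (abs_nonneg e) hσ.2).trans he
    rw [ContinuousMap.smul_apply, primL_apply, ← intervalIntegral.integral_smul]
    have hcN : Continuous fun σ => e • N (Y e) (projIcc 0 1 zero_le_one σ) :=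
      ((N (Y e)).continuous.comp continuous_projIcc).const_smul e
    have hftc := intervalIntegral.integral_eq_sub_of_hasDerivAt (a := (0:ℝ)) (b := s)
      (f := fun σ => u (e * σ)) (f' := fun σ => e • N (Y e) (projIcc 0 1 zero_le_one σ))
      (by
        intro σ hσ
        rw [uIcc_of_le s.2.1] at hσ
        have hσ' : σ ∈ Icc (0:ℝ) 1 := ⟨hσ.1, hσ.2.trans s.2.2⟩
        rw [hNe, projIcc_of_mem zero_le_one hσ', hY, hgu _ (hes σ hσ')]
        have h1 := hd (e * σ) (by linarith [hes σ hσ'])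
        have h2 : HasDerivAt (fun σ : ℝ => e * σ) e σ := by
          simpa using (hasDerivAt_id σ).const_mul e
        have := h1.scomp σ h2
        simpa [Function.comp_def] using this)
      (hcN.intervalIntegrable _ _)
    rw [hftc, hY, hgu _ (hes s s.2)]
    simp
  have hfin : u =ᶠ[𝓝 0] fun e => ContinuousMap.evalCLM ℝ (⟨1, by simp⟩ : I01) (ψ e) + u 0 := by
    filter_upwards [key, hev] with e h1 h2
    rw [h1]
    change u e = Y e _ + u 0
    rw [hY]
    simp [hgu e h2]
  refine AnalyticAt.congr ?_ hfin.symm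
  have hev1 := AnalyticAt.fun_comp
    ((ContinuousMap.evalCLM (M := E) ℝ (⟨1, by simp⟩ : I01)).analyticAt (ψ 0)) hψan
  exact hev1.add analyticAt_const

lemma analytic_of_ode' [CompleteSpace E] {f : E → ℝ → E} {u : ℝ → E} {t0 : ℝ}
    (hf : AnalyticAt ℝ (fun q : E × ℝ => f q.1 q.2) (u t0, t0))
    (hu : ∀ᶠ t in 𝓝 t0, HasDerivAt u (f (u t) t) t) : AnalyticAt ℝ u t0 := by
  let γ : ℝ → E × ℝ := fun s => (u (s + t0), s + t0)
  have hγ : AnalyticAt ℝ γ 0 := by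
    refine analytic_of_ode (f := fun q => (f q.1 q.2, (1:ℝ))) ?_ ?_
    · simp only [γ, zero_add]
      exact hf.prod analyticAt_const
    · have : Tendsto (fun s : ℝ => s + t0) (𝓝 0) (𝓝 t0) := by
        have : Continuous (fun s : ℝ => s + t0) := by fun_prop
        simpa using this.tendsto 0
      filter_upwards [this.eventually hu] with s hs
      exact (hs.comp_add_const s t0).prodMk ((hasDerivAt_id s).add_const t0)
  have h1 : AnalyticAt ℝ (fun s => (γ s).1) 0 := by
    exact AnalyticAt.comp (g := Prod.fst) (f := γ) analyticAt_fst hγ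
  have h2 : AnalyticAt ℝ (fun t : ℝ => t - t0) t0 := analyticAt_id.sub analyticAt_const
  have h3 := AnalyticAt.fun_comp (g := fun s => (γ s).1) (f := fun t : ℝ => t - t0) (x := t0) (by simpa using h1) h2
  simpa [γ] using h3

lemma exists_ode [CompleteSpace E] {f : E → ℝ → E} {x0 : E} {t0 : ℝ}
    (hf : AnalyticAt ℝ (fun q : E × ℝ => f q.1 q.2) (x0, t0)) :
    ∃ w : ℝ → E, w t0 = x0 ∧ ∃ r > (0:ℝ), ∀ t ∈ Ioo (t0 - r) (t0 + r),
      HasDerivAt w (f (w t) t) t := by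
  have h1 : ContDiffAt ℝ 1 (fun q : E × ℝ => (f q.1 q.2, (1:ℝ))) (x0, t0) :=
    (hf.prod analyticAt_const).contDiffAt
  obtain ⟨γ, hγ0, r, hr, hγ⟩ :=
    h1.exists_forall_mem_closedBall_exists_eq_forall_mem_Ioo_hasDerivAt₀ t0
  have hsnd : ∀ t ∈ Ioo (t0 - r) (t0 + r), (γ t).2 = t := by
    have hconst : ∀ t ∈ Ioo (t0 - r) (t0 + r), HasDerivAt (fun t => (γ t).2 - t) 0 t := by
      intro t ht
      have h := (hasFDerivAt_snd (𝕜 := ℝ) (p := γ t)).comp_hasDerivAt t (hγ t ht)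
      have h' := HasDerivAt.sub h (hasDerivAt_id t)
      have h0 : (ContinuousLinearMap.snd ℝ E ℝ) (f (γ t).1 (γ t).2, (1:ℝ)) - 1 = 0 := by simp
      rw [h0] at h'
      exact h'
    intro t ht
    have := (convex_Ioo (t0 - r) (t0 + r)).is_const_of_fderivWithin_eq_zero (𝕜 := ℝ)
      (f := fun t => (γ t).2 - t)
      (fun t ht => (hconst t ht).differentiableAt.differentiableWithinAt)
      (fun t ht => by
        rw [fderivWithin_of_isOpen isOpen_Ioo ht]
        ext; simp [(hconst t ht).deriv])
      ht (⟨by linarith, by linarith⟩ : t0 ∈ Ioo (t0 - r) (t0 + r))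
    simp [hγ0] at this
    linarith
  refine ⟨fun t => (γ t).1, by simp [hγ0], r, hr, fun t ht => ?_⟩
  have := (hasFDerivAt_fst (𝕜 := ℝ) (p := γ t)).comp_hasDerivAt t (hγ t ht)
  simpa [hsnd t ht, Function.comp_def] using this

end aux

/-- **Sequential criterion for continuation of real-analytic solutions (Theorem
`sequenza`).**  `ℝ^P` (modelled as `Fin P → ℝ`) carries the maximum coordinate norm.  Let
`U` be real-analytic on `(a,t0)`, a solution of `U' = F (U t) t` there, where `F` is
real-analytic on an open set `G` containing the graph of `U`, uniformly Lipschitz-like at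
every point of `G`.  If `(U0, t0) ∈ G` and there is a strictly increasing sequence
`t_h → t0` with `U (t_h) → U0`, then `U(t) → U0` as `t → t0⁻`, and consequently `U`
extends to a real-analytic solution of the same equation beyond `t0`. -/
theorem stmt_6 {P : ℕ} (a t0 : ℝ) (hat0 : a < t0)
    (U : ℝ → Fin P → ℝ)
    (hUan : ∀ t ∈ Ioo a t0, AnalyticAt ℝ U t)
    (G : Set ((Fin P → ℝ) × ℝ)) (hG : IsOpen G)
    (hmem : ∀ t ∈ Ioo a t0, ((U t, t) : (Fin P → ℝ) × ℝ) ∈ G)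
    (F : (Fin P → ℝ) → ℝ → Fin P → ℝ)
    (hFan : ∀ p ∈ G, AnalyticAt ℝ (fun q : (Fin P → ℝ) × ℝ => F q.1 q.2) p)
    (hlip : ∀ p ∈ G, ∃ K : ℝ, ∃ O ∈ nhds p,
      ∀ (A B : Fin P → ℝ) (t : ℝ), ((A, t) : (Fin P → ℝ) × ℝ) ∈ O →
        ((B, t) : (Fin P → ℝ) × ℝ) ∈ O → ‖F A t - F B t‖ ≤ K * ‖A - B‖)
    (hode : ∀ t ∈ Ioo a t0, HasDerivAt U (F (U t) t) t)
    (U0 : Fin P → ℝ) (hU0G : ((U0, t0) : (Fin P → ℝ) × ℝ) ∈ G)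
    (ts : ℕ → ℝ) (hmono : StrictMono ts) (hts : ∀ h, ts h ∈ Ioo a t0)
    (htends : Filter.Tendsto ts Filter.atTop (nhds t0))
    (hUts : Filter.Tendsto (fun h => U (ts h)) Filter.atTop (nhds U0)) :
    Filter.Tendsto U (nhdsWithin t0 (Iio t0)) (nhds U0) ∧
    ∃ r > (0 : ℝ), ∃ Uext : ℝ → Fin P → ℝ,
      (∀ t ∈ Ioo a (t0 + r), AnalyticAt ℝ Uext t) ∧
      (∀ t ∈ Ioo a t0, Uext t = U t) ∧ Uext t0 = U0 ∧
      (∀ t ∈ Ioo a (t0 + r), HasDerivAt Uext (F (Uext t) t) t) := by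
  have hFc : ContinuousAt (fun q : (Fin P → ℝ) × ℝ => F q.1 q.2) (U0, t0) :=
    (hFan _ hU0G).continuousAt
  -- Step 1 : the limit
  have hlim : Filter.Tendsto U (nhdsWithin t0 (Iio t0)) (nhds U0) := by
    obtain ⟨M, hM⟩ : ∃ M : ℝ, M = ‖F U0 t0‖ + 1 := ⟨_, rfl⟩
    have hM0 : 0 < M := by rw [hM]; positivity
    have hb : ∀ᶠ q in nhds ((U0, t0) : (Fin P → ℝ) × ℝ), ‖F q.1 q.2‖ < M :=
      hFc.norm.eventually (gt_mem_nhds (by simp [hM]))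
    obtain ⟨ρ, hρ, hball⟩ := Metric.eventually_nhds_iff.mp hb
    have hbd : ∀ A t, ‖A - U0‖ < ρ → |t - t0| < ρ → ‖F A t‖ < M := by
      intro A t hA ht
      refine hball (y := (A, t)) ?_
      rw [Prod.dist_eq]
      exact max_lt (by rwa [dist_eq_norm]) (by rwa [Real.dist_eq])
    rw [Metric.tendsto_nhds]
    intro ε hε
    set η := min ε ρ with hη
    have hη0 : 0 < η := lt_min hε hρ
    have e1 : ∀ᶠ h in Filter.atTop, ‖U (ts h) - U0‖ < η / 2 := by
      have := (Metric.tendsto_nhds.mp hUts) (η / 2) (by positivity)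
      simpa [dist_eq_norm] using this
    have e2 : ∀ᶠ h in Filter.atTop, |ts h - t0| < min ρ (η / 2 / M) := by
      have := (Metric.tendsto_nhds.mp htends) (min ρ (η / 2 / M)) (lt_min hρ (by positivity))
      simpa [Real.dist_eq] using this
    obtain ⟨h, h1, h2⟩ := (e1.and e2).exists
    have hth := hts h
    have h3 : t0 - ts h < ρ := by
      have := (abs_lt.mp h2).1; linarith [min_le_left ρ (η / 2 / M)]
    have h4 : M * (t0 - ts h) < η / 2 := by
      have := (abs_lt.mp h2).1
      have h5 : t0 - ts h < η / 2 / M := by linarith [min_le_right ρ (η / 2 / M)]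
      rw [lt_div_iff₀ hM0] at h5
      linarith
    have hI : Ioo (ts h) t0 ∈ nhdsWithin t0 (Iio t0) := Ioo_mem_nhdsLT hth.2
    filter_upwards [hI] with t ht
    have hsub : ∀ x ∈ Icc (ts h) t, x ∈ Ioo a t0 := fun x hx =>
      ⟨hth.1.trans_le hx.1, hx.2.trans_lt ht.2⟩
    have hder : ∀ x ∈ Icc (ts h) t, HasDerivAt (fun y => U y - U (ts h)) (F (U x) x) x :=
      fun x hx => (hode x (hsub x hx)).sub_const _
    have key := image_norm_le_of_norm_deriv_right_lt_deriv_boundary (a := ts h) (b := t)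
      (f := fun x => U x - U (ts h)) (f' := fun x => F (U x) x)
      (B := fun x => M * (x - ts h)) (B' := fun _ => M)
      (fun x hx => (hder x hx).continuousAt.continuousWithinAt)
      (fun x hx => (hder x (Ico_subset_Icc_self hx)).hasDerivWithinAt)
      (by simp)
      (fun x => by simpa using ((hasDerivAt_id x).sub_const (ts h)).const_mul M)
      (by
        intro x hx hxe
        have hx1 : x < t0 := hx.2.trans ht.2
        refine hbd _ _ ?_ ?_
        · have : M * (x - ts h) ≤ M * (t0 - ts h) := by gcongr
          have h6 : ‖U x - U0‖ ≤ ‖U x - U (ts h)‖ + ‖U (ts h) - U0‖ :=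
            norm_sub_le_norm_sub_add_norm_sub _ _ _
          have h7 : η ≤ ρ := min_le_right _ _
          linarith
        · rw [abs_lt]; constructor <;> linarith [hx.1])
      (right_mem_Icc.mpr ht.1.le)
    have : M * (t - ts h) ≤ M * (t0 - ts h) := by
      have := ht.2.le
      gcongr
    have h6 : ‖U t - U0‖ ≤ ‖U t - U (ts h)‖ + ‖U (ts h) - U0‖ :=
      norm_sub_le_norm_sub_add_norm_sub _ _ _
    have h7 : η ≤ ε := min_le_left _ _
    rw [dist_eq_norm]
    linarith
  refine ⟨hlim, ?_⟩
  -- Step 2 : local solution to the right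
  obtain ⟨w, hw0, r1, hr1, hw⟩ := exists_ode (hFan _ hU0G)
  have hwt0 : HasDerivAt w (F U0 t0) t0 := by
    have := hw t0 ⟨by linarith, by linarith⟩
    rwa [hw0] at this
  have hwG : ∀ᶠ t in nhds t0, ((w t, t) : (Fin P → ℝ) × ℝ) ∈ G := by
    have hc : ContinuousAt (fun t => ((w t, t) : (Fin P → ℝ) × ℝ)) t0 :=
      hwt0.continuousAt.prodMk continuousAt_id
    refine hc.eventually (hG.mem_nhds ?_)
    simpa [hw0] using hU0G
  obtain ⟨r2, hr2, hwG'⟩ := Metric.eventually_nhds_iff.mp hwG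
  let V : ℝ → Fin P → ℝ := fun t => if t < t0 then U t else w t
  have hVlt : ∀ t, t < t0 → V t = U t := fun t ht => by simp [V, ht]
  have hVge : ∀ t, t0 ≤ t → V t = w t := fun t ht => by simp [V, not_lt.mpr ht]
  have hV0 : V t0 = U0 := by rw [hVge t0 le_rfl, hw0]
  have hVevlt : ∀ t, t < t0 → V =ᶠ[nhds t] U := fun t ht => by
    filter_upwards [Iio_mem_nhds ht] with s hs using hVlt s hs
  have hVlim : Filter.Tendsto V (nhdsWithin t0 (Iio t0)) (nhds U0) := by
    refine hlim.congr' ?_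
    filter_upwards [self_mem_nhdsWithin] with s hs using (hVlt s hs).symm
  have hd_lt : ∀ t ∈ Ioo a t0, HasDerivAt V (F (V t) t) t := fun t ht => by
    rw [hVlt t ht.2]
    exact (hode t ht).congr_of_eventuallyEq (hVevlt t ht.2)
  have hd0 : HasDerivAt V (F U0 t0) t0 := by
    have hleft : HasDerivWithinAt V (F U0 t0) (Iic t0) t0 := by
      refine hasDerivWithinAt_Iic_of_tendsto_deriv (s := Ioo a t0)
        (fun t ht => (hd_lt t ht).differentiableAt.differentiableWithinAt) ?_
        (Ioo_mem_nhdsLT hat0) ?_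
      · unfold ContinuousWithinAt
        rw [hV0]
        exact hVlim.mono_left (nhdsWithin_mono _ Ioo_subset_Iio_self)
      · have hp : Filter.Tendsto (fun t => ((V t, t) : (Fin P → ℝ) × ℝ))
            (nhdsWithin t0 (Iio t0)) (nhds (U0, t0)) :=
          hVlim.prodMk_nhds (Filter.tendsto_id.mono_left nhdsWithin_le_nhds)
        refine (hFc.tendsto.comp hp).congr' ?_
        filter_upwards [Ioo_mem_nhdsLT hat0] with t ht using (hd_lt t ht).deriv.symm
    have hright : HasDerivWithinAt V (F U0 t0) (Ici t0) t0 :=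
      hwt0.hasDerivWithinAt.congr (fun t ht => hVge t ht) (hVge t0 le_rfl)
    have := hleft.union hright
    rwa [Iic_union_Ici, hasDerivWithinAt_univ] at this
  have hall : ∀ t ∈ Ioo a (t0 + min r1 r2),
      HasDerivAt V (F (V t) t) t ∧ ((V t, t) : (Fin P → ℝ) × ℝ) ∈ G := by
    intro t ht
    rcases lt_trichotomy t t0 with h | h | h
    · exact ⟨hd_lt t ⟨ht.1, h⟩, by rw [hVlt t h]; exact hmem t ⟨ht.1, h⟩⟩
    · subst h
      rw [hV0]
      exact ⟨hd0, hU0G⟩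
    · have hb1 : t < t0 + r1 := ht.2.trans_le (by gcongr; exact min_le_left _ _)
      have hb2 : t < t0 + r2 := ht.2.trans_le (by gcongr; exact min_le_right _ _)
      have hev : V =ᶠ[nhds t] w := by
        filter_upwards [Ioi_mem_nhds h] with s hs using hVge s (le_of_lt hs)
      rw [hVge t h.le]
      refine ⟨(hw t ⟨by linarith, hb1⟩).congr_of_eventuallyEq hev, hwG' ?_⟩
      rw [Real.dist_eq, abs_lt]; constructor <;> linarith
  refine ⟨min r1 r2, lt_min hr1 hr2, V, ?_, fun t ht => hVlt t ht.2, hV0,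
    fun t ht => (hall t ht).1⟩
  intro t ht
  refine analytic_of_ode' (hFan _ (hall t ht).2) ?_
  filter_upwards [isOpen_Ioo.mem_nhds ht] with s hs using (hall s hs).1
end
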